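/- Let G and H be abelian groups such that G contains a subgroup of exponent 2 of cardinality greater than 2^(2^𝔠), where 𝔠 = 2^{ℵ₀} is the cardinality of the continuum, and such that H contains no infinite subgroup of exponent 2. Then there exists no continuous finite-to-one map f : G^# → H^# (i.e., no continuous map all of whose fibers f⁻¹(y) are finite). -/

import Mathlib

open scoped Pointwise

/-- The Bohr topology on an abelian group `G`: the initial topology induced by the
family of all group homomorphisms from `G` to the circle group `ℝ/ℤ`. -/
noncomputable def bohrTopology (G : Type*) [AddCommGroup G] : TopologicalSpace G :=
  ⨅ χ : G →+ AddCircle (1 : ℝ), TopologicalSpace.induced χ inferInstance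

/-!
Suppose `f` is continuous at `a`, and embed `H` into a direct sum of copies of the countable group
`ℚ × ℚ/ℤ`. Color the 4-tuples `y` of elements of the large subgroup of exponent 2 by the list of
nonzero coordinates of `f (a + ∑ i, y i) - f a`. There are countably many colors, and
`2 ^ 2 ^ 𝔠` is the third iterated exponential of `ℵ₀`, so by the Erdős–Rado theorem there is a
sequence `g` along which `f (a + ∑ i, g (x i)) - f a = ∑ j, single (s j x) (V j)` for all
increasing `x`, with coefficients `V j` that do not depend on `x`. By Ramsey's theorem we may
assume that whether `s j x = s k y` is decided by the relative order of `x` and `y`; then `s j x`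
determines, and is determined by, the entries of `x` at a set `D j` of positions.

A Bohr neighborhood of `a` contains all `a + v`, `v` of exponent 2, with `v` in some subgroup of
finite index, hence the points `a + ∑ i, g (x i)` for which the positions split into two sets of
even size, `T` and its complement, with `g (x i)` constant modulo that subgroup on each. Choose
such an `x` whose odd entries are those at the positions in `T`, and test continuity against
characters that only see the values `s j y` for which `y` has exactly `m` odd entries in `D j`.
This gives `∑ V j = 0` over the linked `j` with `#(D j ∩ T) = m`, for every even `T` and every `m`.
On four positions these relations force `2 * V j = 0`, so `f` maps infinitely many points into a
coset of the finite 2-torsion of `H`.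
-/

/-! ### Erdős–Rado and Ramsey theorems -/

section EndHomogeneous

variable {ι α γ : Type*} [LinearOrder α]

/-- A set is end-homogeneous for a coloring of pairs `(x, u)`, thought of as tuples with last
entry `u`, if within the set the color does not depend on the last entry. -/
def IsEndHomogeneous (col : (ι → α) → α → γ) (S : Set α) : Prop :=
  ∀ x : ι → α, (∀ k, x k ∈ S) → ∀ u ∈ S, ∀ v ∈ S, (∀ k, x k < u) → (∀ k, x k < v) →
    col x u = col x v

lemma IsEndHomogeneous.exists_color [Nonempty γ] {col : (ι → α) → α → γ} {S : Set α}
    (hS : IsEndHomogeneous col S) {x : ι → α} (hx : ∀ k, x k ∈ S) :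
    ∃ k, ∀ u ∈ S, (∀ i, x i < u) → col x u = k := by
  by_cases h : ∃ u ∈ S, ∀ i, x i < u
  · obtain ⟨u, hu, hxu⟩ := h
    exact ⟨col x u, fun v hv hxv ↦ hS x hx v hv u hu hxv hxu⟩
  · exact ⟨Classical.arbitrary γ, fun u hu hxu ↦ (h ⟨u, hu, hxu⟩).elim⟩

lemma IsEndHomogeneous.exists_init_coloring [Nonempty γ] {r : ℕ} {col : (Fin (r + 1) → α) → γ}
    {S : Set α} (hS : IsEndHomogeneous (fun (x : Fin r → α) u ↦ col (Fin.snoc x u)) S) :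
    ∃ col' : (Fin r → S) → γ, ∀ y : Fin (r + 1) → S, StrictMono y →
      col (fun i ↦ y i) = col' (Fin.init y) := by
  choose col' hcol' using fun x : Fin r → S ↦ hS.exists_color fun i ↦ (x i).2
  refine ⟨col', fun y hy ↦ ?_⟩
  calc col (fun i ↦ y i) = col (Fin.snoc (fun i ↦ (Fin.init y i : α)) (y (Fin.last r))) :=
        congrArg col (Fin.snoc_init_self fun i ↦ (y i : α)).symm
    _ = col' (Fin.init y) :=
        hcol' _ _ (y (Fin.last r)).2 fun i ↦ hy (Fin.castSucc_lt_last i)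

/-- The membership predicate of `branch`, defined by well-founded recursion. -/
def MemBranch [WellFoundedLT α] (col : (ι → α) → α → γ) (q u : α) : Prop :=
  u < q ∧ ∀ x : ι → α, (∀ k, ∃ _ : x k < u, MemBranch col q (x k)) → col x u = col x q
termination_by wellFounded_lt.wrap u
decreasing_by assumption

/-- The branch of predecessors of `q` in the Erdős–Rado partition tree of `col`: the elements
`u < q` that no tuple of smaller elements of the branch distinguishes from `q`. -/
def branch [WellFoundedLT α] (col : (ι → α) → α → γ) (q : α) : Set α := {u | MemBranch col q u}

variable [WellFoundedLT α] {col : (ι → α) → α → γ} {q q' u : α}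

lemma mem_branch_iff : u ∈ branch col q ↔
    u < q ∧ ∀ x : ι → α, (∀ k, x k < u ∧ x k ∈ branch col q) → col x u = col x q := by
  change MemBranch col q u ↔ _
  rw [MemBranch]
  simp only [exists_prop]
  rfl

lemma lt_of_mem_branch (hu : u ∈ branch col q) : u < q := (mem_branch_iff.1 hu).1

lemma col_eq_of_mem_branch (hu : u ∈ branch col q) {x : ι → α} (hx : ∀ k, x k ∈ branch col q)
    (hxu : ∀ k, x k < u) : col x u = col x q :=
  (mem_branch_iff.1 hu).2 x fun k ↦ ⟨hxu k, hx k⟩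

lemma isEndHomogeneous_branch (col : (ι → α) → α → γ) (q : α) :
    IsEndHomogeneous col (branch col q) := fun _ hx _ hu _ hv hxu hxv ↦
  (col_eq_of_mem_branch hu hx hxu).trans (col_eq_of_mem_branch hv hx hxv).symm

section Rigidity

variable {L : Type*} [LinearOrder L]
  (e : L ≃o branch col q) (e' : L ≃o branch col q')
  (hcol : ∀ x : ι → L, col (fun k ↦ e (x k)) q = col (fun k ↦ e' (x k)) q')
include hcol

lemma not_lt_of_forall_lt_eq {l : L} (hl : ∀ m < l, (e m : α) = e' m) : ¬ (e l : α) < e' l := by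
  intro hlt
  have hmem : (e l : α) ∈ branch col q' := by
    refine mem_branch_iff.2 ⟨hlt.trans (lt_of_mem_branch (e' l).2), fun x hx ↦ ?_⟩
    obtain ⟨m, hm⟩ : ∃ m : ι → L, ∀ k, (e' (m k) : α) = x k :=
      ⟨fun k ↦ e'.symm ⟨x k, (hx k).2⟩, fun k ↦ by simp⟩
    have hml k : m k < l := e'.lt_iff_lt.1 (Subtype.coe_lt_coe.1 (hm k ▸ (hx k).1.trans hlt))
    have hem k : (e (m k) : α) = x k := (hl _ (hml k)).trans (hm k)
    calc col x (e l) = col x q :=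
          col_eq_of_mem_branch (e l).2 (fun k ↦ hem k ▸ (e (m k)).2) fun k ↦ (hx k).1
      _ = col x q' := by simpa only [hem, hm] using hcol m
  obtain ⟨m, hm⟩ := e'.surjective ⟨e l, hmem⟩
  have hml : m < l := e'.lt_iff_lt.1 (hm ▸ hlt)
  exact hml.ne (e.injective (Subtype.ext ((hl m hml).trans (congrArg Subtype.val hm))))

lemma branch_enumeration_unique [WellFoundedLT L] (l : L) : (e l : α) = e' l := by
  induction l using WellFoundedLT.induction with
  | ind l ih =>
    exact le_antisymm
      (not_lt.1 (not_lt_of_forall_lt_eq e' e (fun x ↦ (hcol x).symm) fun m hm ↦ (ih m hm).symm))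
      (not_lt.1 (not_lt_of_forall_lt_eq e e' hcol ih))

lemma not_lt_of_branch_code_eq [WellFoundedLT L] : ¬ q < q' := by
  intro hlt
  have hmem : q ∈ branch col q' := by
    refine mem_branch_iff.2 ⟨hlt, fun x hx ↦ ?_⟩
    obtain ⟨m, hm⟩ : ∃ m : ι → L, ∀ k, (e' (m k) : α) = x k :=
      ⟨fun k ↦ e'.symm ⟨x k, (hx k).2⟩, fun k ↦ by simp⟩
    simpa only [branch_enumeration_unique e e' hcol, hm] using hcol m
  obtain ⟨l, hl⟩ := e'.surjective ⟨q, hmem⟩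
  have hlq : (e l : α) = q :=
    (branch_enumeration_unique e e' hcol l).trans (congrArg Subtype.val hl)
  exact (lt_of_mem_branch (e l).2).ne hlq

lemma eq_of_branch_code_eq [WellFoundedLT L] : q = q' :=
  le_antisymm (not_lt.1 (not_lt_of_branch_code_eq e' e fun x ↦ (hcol x).symm))
    (not_lt.1 (not_lt_of_branch_code_eq e e' hcol))

end Rigidity

end EndHomogeneous

section ErdosRado

open Cardinal Set

universe u

variable {α γ : Type u}

lemma exists_orderIso_Iio_of_mk_le [LinearOrder α] [WellFoundedLT α] {c : Cardinal.{u}}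
    (hα : #α ≤ c) : ∃ i : (Order.succ c).ord.ToType, Nonempty (Iio i ≃o α) := by
  have hlt : Ordinal.type (α := α) (· < ·) <
      Ordinal.type (α := (Order.succ c).ord.ToType) (· < ·) := by
    rw [Ordinal.type_toType, lt_ord, Ordinal.card_type]
    exact Order.lt_succ_of_le hα
  obtain ⟨f⟩ := Ordinal.type_lt_iff.1 hlt
  exact ⟨f.top, ⟨(OrderIso.ofRelIsoLT f.subrelIso)⟩⟩

variable {ι : Type} [Finite ι] {c : Cardinal.{u}}

lemma mk_branch_code_le (hc : ℵ₀ ≤ c) (hγ : #γ ≤ 2 ^ c) :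
    #(Σ i : (Order.succ c).ord.ToType, ((ι → Iio i) → γ)) ≤ 2 ^ c := by
  have hfiber (i : (Order.succ c).ord.ToType) : #((ι → Iio i) → γ) ≤ 2 ^ c := by
    have htuples : #(ι → Iio i) ≤ c := by
      have := Fintype.ofFinite ι
      calc #(ι → Iio i) = #(Iio i) ^ Fintype.card ι := by simp
        _ ≤ c ^ Fintype.card ι :=
          power_le_power_right (Order.lt_succ_iff.1 ((mk_Iio_lt i (by simp)).trans_eq (by simp)))
        _ ≤ c := mod_cast power_nat_le hc
    calc #((ι → Iio i) → γ) = #γ ^ #(ι → Iio i) := by simp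
      _ ≤ (2 ^ c) ^ #(ι → Iio i) := power_le_power_right hγ
      _ ≤ (2 ^ c) ^ c := power_le_power_left (power_ne_zero _ two_ne_zero) htuples
      _ = 2 ^ c := by rw [← power_mul, mul_eq_self hc]
  calc #(Σ i : (Order.succ c).ord.ToType, ((ι → Iio i) → γ))
      ≤ sum fun _ : (Order.succ c).ord.ToType ↦ 2 ^ c := by
        rw [mk_sigma]
        exact sum_le_sum _ _ hfiber
    _ = Order.succ c * 2 ^ c := by simp
    _ ≤ 2 ^ c * 2 ^ c := mul_le_mul_left (Order.succ_le_of_lt (cantor c)) _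
    _ = 2 ^ c := mul_eq_self (hc.trans (cantor c).le)

-- If all branches were small, then the order type of the branch of an element, together with the
-- colors along it, would be one of only `2 ^ c` codes, and the code determines the element.
theorem exists_isEndHomogeneous [LinearOrder α] [WellFoundedLT α] (hc : ℵ₀ ≤ c)
    (hγ : #γ ≤ 2 ^ c) (hα : 2 ^ c < #α) (col : (ι → α) → α → γ) :
    ∃ S : Set α, c < #S ∧ IsEndHomogeneous col S := by
  by_contra! h
  have hbranch q : #(branch col q) ≤ c :=
    not_lt.1 fun hq ↦ h _ hq (isEndHomogeneous_branch col q)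
  have hcode q : ∃ A : Σ i : (Order.succ c).ord.ToType, ((ι → Iio i) → γ),
      ∃ e : Iio A.1 ≃o branch col q, ∀ x, A.2 x = col (fun k ↦ e (x k)) q := by
    obtain ⟨i, ⟨e⟩⟩ := exists_orderIso_Iio_of_mk_le (hbranch q)
    exact ⟨⟨i, fun x ↦ col (fun k ↦ e (x k)) q⟩, e, fun _ ↦ rfl⟩
  choose code hcode using hcode
  have hinj : Function.Injective code := by
    intro q q' hqq'
    obtain ⟨e', he'⟩ := hcode q'
    obtain ⟨e, he⟩ := hqq' ▸ hcode q
    exact eq_of_branch_code_eq e e' fun x ↦ (he x).symm.trans (he' x)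
  exact hα.not_ge ((mk_le_of_injective hinj).trans (mk_branch_code_le hc hγ))

theorem erdos_rado {r : ℕ} {κ : Cardinal.{u}} (hκ : ℵ₀ ≤ κ) (hγ : #γ ≤ κ)
    [LinearOrder α] [WellFoundedLT α] (hα : (2 ^ ·)^[r] κ < #α) (col : (Fin (r + 1) → α) → γ) :
    ∃ S : Set α, κ < #S ∧ ∃ k, ∀ x : Fin (r + 1) → α, StrictMono x → (∀ i, x i ∈ S) →
      col x = k := by
  induction r generalizing α with
  | zero =>
    obtain ⟨k, hk⟩ := infinite_pigeonhole_card (fun a ↦ col fun _ ↦ a) (Order.succ κ)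
      (Order.succ_le_of_lt hα) (hκ.trans (Order.le_succ κ))
      (by rw [(isRegular_succ hκ).cof_ord]; exact hγ.trans_lt (Order.lt_succ κ))
    refine ⟨_, Order.succ_le_iff.1 hk, k, fun x _ hx ↦ (congrArg col ?_).trans (hx 0)⟩
    exact funext fun i ↦ congrArg x (Fin.fin_one_eq_zero i)
  | succ r ih =>
    have hiter : κ ≤ (2 ^ ·)^[r] κ :=
      Function.id_le_iterate_of_id_le (fun c ↦ (cantor c).le) r κ
    rw [Function.iterate_succ_apply'] at hα
    obtain ⟨S, hS, hSend⟩ := exists_isEndHomogeneous (hκ.trans hiter)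
      ((hγ.trans hiter).trans (cantor _).le) hα fun (x : Fin (r + 1) → α) u ↦ col (Fin.snoc x u)
    obtain ⟨a⟩ : Nonempty α := mk_ne_zero_iff.1 (pos_of_gt hα).ne'
    have : Nonempty γ := ⟨col fun _ ↦ a⟩
    obtain ⟨col', hcol'⟩ := hSend.exists_init_coloring
    obtain ⟨T, hT, k, hk⟩ := ih hS col'
    refine ⟨(↑) '' T, by rwa [mk_image_eq Subtype.val_injective], k, fun x hx hxT ↦ ?_⟩
    choose y hyT hyx using hxT
    obtain rfl : (fun i ↦ (y i : α)) = x := funext hyx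
    have hy : StrictMono y := fun i j hij ↦ hx hij
    rw [hcol' y hy]
    exact hk _ (fun i j hij ↦ hy (Fin.castSucc_lt_castSucc_iff.2 hij)) fun i ↦ hyT _

lemma exists_nat_orderEmbedding [LinearOrder α] [WellFoundedLT α] [Infinite α] :
    Nonempty (ℕ ↪o α) := by
  let f := Infinite.natEmbedding α
  obtain ⟨g, hg⟩ := (wellQuasiOrdered_le (α := α)).exists_monotone_subseq f
  exact ⟨OrderEmbedding.ofStrictMono (f ∘ g)
    (Monotone.strictMono_of_injective hg (f.injective.comp g.injective))⟩

theorem exists_nat_embedding_forall_color_eq {r : ℕ} {δ : Type*} [Countable δ]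
    (hα : (2 ^ ·)^[r] ℵ₀ < #α) (col : (Fin (r + 1) → α) → δ) :
    ∃ g : ℕ ↪ α, ∀ x y : Fin (r + 1) ↪o ℕ, col (g ∘ x) = col (g ∘ y) := by
  obtain ⟨_, _⟩ := exists_wellFoundedLT α
  obtain ⟨f, hf⟩ := exists_injective_nat δ
  obtain ⟨S, hS, k, hk⟩ := erdos_rado le_rfl (by simp) hα fun x ↦ ULift.up.{u} (f (col x))
  have : Infinite S := infinite_iff.2 hS.le
  obtain ⟨g⟩ := exists_nat_orderEmbedding (α := S)
  refine ⟨g.toEmbedding.trans (Function.Embedding.subtype _), fun x y ↦ hf ?_⟩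
  have hcol (x : Fin (r + 1) ↪o ℕ) := hk (fun i ↦ g (x i))
    (fun i j hij ↦ g.strictMono (x.strictMono hij)) fun i ↦ (g (x i)).2
  exact ULift.up_injective ((hcol x).trans (hcol y).symm)

end ErdosRado

section Ramsey

open Filter

variable {γ : Type*} [Finite γ]

lemma exists_eventually_eq_hyperfilter {X : Type*} [Infinite X] (f : X → γ) :
    ∃ k, ∀ᶠ n in hyperfilter X, f n = k := by
  obtain ⟨k, hk⟩ := Ultrafilter.eq_pure_of_finite ((hyperfilter X).map f)
  exact ⟨k, Ultrafilter.mem_map.1 (hk ▸ Ultrafilter.mem_pure.2 rfl : {k} ∈ (hyperfilter X).map f)⟩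

lemma exists_strictMono_forall_le_color_eq {ι : Type*} [Finite ι] (col : (ι → ℕ) → ℕ → γ) :
    ∃ f : ℕ → ℕ, StrictMono f ∧ ∃ c : (ι → ℕ) → γ, ∀ a b, a < b → ∀ x : ι → ℕ, x ≤ (fun _ ↦ f a) →
      col x (f b) = c x := by
  have := Fintype.ofFinite ι
  classical
  choose c hc using fun x ↦ exists_eventually_eq_hyperfilter (col x)
  have heventually (m : ℕ) : ∀ᶠ n in hyperfilter ℕ, m < n ∧ ∀ x ≤ (fun _ ↦ m), col x n = c x := by
    refine .and (hyperfilter_le_cofinite ?_) ?_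
    · exact Nat.cofinite_eq_atTop ▸ eventually_gt_atTop m
    · exact (eventually_all_finite (Set.finite_Iic _)).2 fun x _ ↦ hc x
  obtain ⟨f, -, hf⟩ := exists_seq_of_forall_finset_exists (fun _ ↦ True)
    (fun m n : ℕ ↦ m < n ∧ ∀ x ≤ (fun _ ↦ m), col x n = c x) fun s _ ↦ by
      simpa using ((eventually_all_finset s).2 fun m _ ↦ heventually m).exists
  exact ⟨f, fun a b hab ↦ (hf a b hab).1, c, fun a b hab ↦ (hf a b hab).2⟩

lemma exists_infinite_isEndHomogeneous {ι : Type*} [Finite ι] (col : (ι → ℕ) → ℕ → γ) :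
    ∃ S : Set ℕ, S.Infinite ∧ IsEndHomogeneous col S := by
  obtain ⟨f, hf, c, hc⟩ := exists_strictMono_forall_le_color_eq col
  refine ⟨Set.range fun n ↦ f (n + 1),
    Set.infinite_range_of_injective (hf.injective.comp (add_left_injective 1)), fun x hx ↦ ?_⟩
  have hcol : ∀ u ∈ Set.range fun n ↦ f (n + 1), (∀ k, x k < u) → col x u = c x := by
    rintro _ ⟨n, rfl⟩ hxn
    refine hc n (n + 1) n.lt_succ_self x fun k ↦ ?_
    obtain ⟨m, hm : f (m + 1) = x k⟩ := hx k
    have hmn : m + 1 < n + 1 := hf.lt_iff_lt.1 (hm ▸ hxn k)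
    exact hm ▸ hf.monotone (Nat.lt_succ_iff.1 hmn)
  exact fun u hu v hv hxu hxv ↦ (hcol u hu hxu).trans (hcol v hv hxv).symm

theorem infinite_ramsey {r : ℕ} (col : (Fin r → ℕ) → γ) :
    ∃ σ : ℕ ↪o ℕ, ∃ k, ∀ x : Fin r ↪o ℕ, col (σ ∘ x) = k := by
  induction r with
  | zero => exact ⟨.refl _, col Fin.elim0, fun x ↦ congrArg col (Subsingleton.elim _ _)⟩
  | succ r ih =>
    have : Nonempty γ := ⟨col 0⟩
    obtain ⟨S, hS, hSend⟩ :=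
      exists_infinite_isEndHomogeneous fun (x : Fin r → ℕ) u ↦ col (Fin.snoc x u)
    have := hS.to_subtype
    obtain ⟨e⟩ := exists_nat_orderEmbedding (α := S)
    obtain ⟨col', hcol'⟩ := hSend.exists_init_coloring
    obtain ⟨σ, k, hk⟩ := ih fun x ↦ col' (e ∘ x)
    refine ⟨σ.trans (e.trans (OrderEmbedding.subtype _)), k, fun x ↦ ?_⟩
    exact (hcol' (e ∘ σ ∘ x) (e.strictMono.comp (σ.strictMono.comp x.strictMono))).trans
      (hk (Fin.castSuccOrderEmb.trans x))

end Ramsey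

/-! ### Homogeneous families of functions on increasing tuples -/

section Pattern

lemma exists_orderEmbedding_apply_eq_add {X : Type*} [Finite X] {y z : X → ℕ}
    (h : ∀ a b, y a ≤ y b → z a ≤ z b) : ∃ σ : ℕ ↪o ℕ, ∀ a, σ (y a) = y a + z a := by
  have hfactors : z.FactorsThrough y := fun a b hab ↦ le_antisymm (h a b hab.le) (h b a hab.ge)
  have hmono : MonotoneOn (Function.extend y z 0) (Set.range y) := by
    rintro _ ⟨a, rfl⟩ _ ⟨b, rfl⟩ hab
    simpa only [hfactors.extend_apply] using h a b hab
  obtain ⟨φ, hφ, hφz⟩ := hmono.exists_monotone_extension (OrderBot.bddBelow _)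
    ((Set.finite_range y).image _).bddAbove
  refine ⟨OrderEmbedding.ofStrictMono (fun n ↦ n + φ n) (strictMono_id.add_monotone hφ),
    fun a ↦ ?_⟩
  exact congrArg (y a + ·) ((hφz ⟨a, rfl⟩).symm.trans (hfactors.extend_apply 0 a))

lemma exists_orderEmbedding_apply_eq_apply {X : Type*} [Finite X] {y z : X → ℕ}
    (h : ∀ a b, y a ≤ y b ↔ z a ≤ z b) : ∃ σ τ : ℕ ↪o ℕ, ∀ a, σ (y a) = τ (z a) := by
  obtain ⟨σ, hσ⟩ := exists_orderEmbedding_apply_eq_add fun a b ↦ (h a b).1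
  obtain ⟨τ, hτ⟩ := exists_orderEmbedding_apply_eq_add fun a b ↦ (h a b).2
  exact ⟨σ, τ, fun a ↦ by rw [hσ, hτ, add_comm]⟩

lemma exists_orderEmbedding_trans_eq_and_trans_eq {r n : ℕ} (x y : Fin r ↪o ℕ) (hn : r + r ≤ n) :
    ∃ (z : Fin n ↪o ℕ) (p q : Fin r ↪o Fin n), p.trans z = x ∧ q.trans z = y := by
  obtain ⟨A, hA, hAn⟩ := Infinite.exists_superset_card_eq
    (Finset.univ.map x.toEmbedding ∪ Finset.univ.map y.toEmbedding) n
    ((Finset.card_union_le _ _).trans (by simpa using hn))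
  have hfactor (w : Fin r ↪o ℕ) (hw : ∀ i, w i ∈ A) :
      ∃ p : Fin r ↪o Fin n, p.trans (A.orderEmbOfFin hAn) = w := by
    choose p hp using fun i ↦ (A.range_orderEmbOfFin hAn).ge (hw i)
    refine ⟨.ofMapLEIff p fun i j ↦ ?_, RelEmbedding.ext hp⟩
    rw [← (A.orderEmbOfFin hAn).le_iff_le, hp, hp, w.le_iff_le]
  obtain ⟨p, hp⟩ := hfactor x fun i ↦ hA (by simp)
  obtain ⟨q, hq⟩ := hfactor y fun i ↦ hA (by simp)
  exact ⟨_, p, q, hp, hq⟩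

variable {ι I : Type*} {r : ℕ}

/-- A family of functions of increasing `r`-tuples is homogeneous if coincidences of values are
preserved and reflected by increasing maps of the entries. -/
def IsHomogeneous (s : ι → (Fin r ↪o ℕ) → I) : Prop :=
  ∀ (σ : ℕ ↪o ℕ) (x y : Fin r ↪o ℕ) (j j' : ι),
    s j x = s j' y ↔ s j (x.trans σ) = s j' (y.trans σ)

theorem exists_isHomogeneous [Finite ι] (s : ι → (Fin r ↪o ℕ) → I) :
    ∃ σ : ℕ ↪o ℕ, IsHomogeneous fun j x ↦ s j (x.trans σ) := by
  obtain ⟨σ, k, hk⟩ := infinite_ramsey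
    fun (z : Fin (r + r) → ℕ) (p q : Fin r ↪o Fin (r + r)) (j j' : ι) ↦
      ∃ w : Fin (r + r) ↪o ℕ, ⇑w = z ∧ s j (p.trans w) = s j' (q.trans w)
  have hpattern (z p q j j') :
      s j ((p.trans z).trans σ) = s j' ((q.trans z).trans σ) ↔ k p q j j' := by
    simp only [← hk z]
    refine ⟨fun h ↦ ⟨z.trans σ, rfl, h⟩, fun ⟨w, hw, h⟩ ↦ ?_⟩
    obtain rfl : w = z.trans σ := DFunLike.coe_injective hw
    exact h
  refine ⟨σ, fun τ x y j j' ↦ ?_⟩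
  obtain ⟨z, p, q, rfl, rfl⟩ := exists_orderEmbedding_trans_eq_and_trans_eq x y le_rfl
  exact (hpattern z p q j j').trans (hpattern (z.trans τ) p q j j').symm

/-- `f` depends on the `p`-th entry if changing that entry alone can change the value. -/
def DependsOnEntry (f : (Fin r ↪o ℕ) → I) (p : Fin r) : Prop :=
  ∃ x y : Fin r ↪o ℕ, (∀ i ≠ p, x i = y i) ∧ f x ≠ f y

open Classical in
/-- The set of entries on which `f` depends. -/
noncomputable def dependenceSet (f : (Fin r ↪o ℕ) → I) : Finset (Fin r) :=
  Finset.univ.filter (DependsOnEntry f)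

lemma mem_dependenceSet {f : (Fin r ↪o ℕ) → I} {p : Fin r} :
    p ∈ dependenceSet f ↔ DependsOnEntry f p := by
  simp [dependenceSet]

/-- The tuple with the entries of `x` below position `k` and those of `y` from `k` on. -/
def splice {x y : Fin r ↪o ℕ} (hxy : ∀ i, x i ≤ y i) (k : ℕ) : Fin r ↪o ℕ :=
  OrderEmbedding.ofStrictMono (fun i ↦ if (i : ℕ) < k then x i else y i) fun i j hij ↦ by
    have := x.strictMono hij
    have := y.strictMono hij
    have := hxy j
    have : (i : ℕ) < j := hij
    dsimp only
    split_ifs <;> omega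

lemma splice_apply {x y : Fin r ↪o ℕ} (hxy : ∀ i, x i ≤ y i) (k : ℕ) (i : Fin r) :
    splice hxy k i = if (i : ℕ) < k then x i else y i := rfl

variable {f : (Fin r ↪o ℕ) → I} {x y : Fin r ↪o ℕ} {p : Fin r}

lemma apply_eq_of_le_of_eqOn_dependenceSet (hxy : ∀ i, x i ≤ y i)
    (h : ∀ p ∈ dependenceSet f, x p = y p) : f x = f y := by
  have hsplice : ∀ k ≤ r, f (splice hxy k) = f y := by
    intro k hk
    induction k with
    | zero => exact congrArg f (RelEmbedding.ext fun i ↦ by simp [splice_apply])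
    | succ k ih =>
      rw [← ih (Nat.le_of_succ_le hk)]
      let p : Fin r := ⟨k, hk⟩
      have hoff : ∀ i ≠ p, splice hxy (k + 1) i = splice hxy k i := fun i hi ↦ by
        have : (i : ℕ) ≠ k := Fin.val_ne_of_ne hi
        simp only [splice_apply, show (i : ℕ) < k + 1 ↔ (i : ℕ) < k by omega]
      by_cases hp : p ∈ dependenceSet f
      · refine congrArg f (RelEmbedding.ext fun i ↦ ?_)
        obtain rfl | hi := eq_or_ne i p
        · simp [splice_apply, p, h _ hp]
        · exact hoff i hi
      · by_contra hne
        exact hp (mem_dependenceSet.2 ⟨_, _, hoff, hne⟩)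
  rw [← hsplice r le_rfl]
  exact congrArg f (RelEmbedding.ext fun i ↦ (if_pos i.isLt).symm)

lemma apply_eq_of_eqOn_dependenceSet (h : ∀ p ∈ dependenceSet f, x p = y p) : f x = f y := by
  let z : Fin r ↪o ℕ := OrderEmbedding.ofStrictMono (fun i ↦ max (x i) (y i))
    fun i j hij ↦ max_lt_max (x.strictMono hij) (y.strictMono hij)
  have hz (p) : z p = max (x p) (y p) := rfl
  calc f x = f z := apply_eq_of_le_of_eqOn_dependenceSet (fun i ↦ le_max_left _ _)
        fun p hp ↦ by rw [hz, h p hp, max_self]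
    _ = f y := (apply_eq_of_le_of_eqOn_dependenceSet (fun i ↦ le_max_right _ _)
        fun p hp ↦ by rw [hz, h p hp, max_self]).symm

lemma eqOn_of_map_eq {D : Finset (Fin r)} (h : D.map x.toEmbedding = D.map y.toEmbedding) :
    ∀ p ∈ D, x p = y p := by
  have hx : StrictMono fun p : D ↦ x p := fun _ _ hpq ↦ x.strictMono hpq
  have hy : StrictMono fun p : D ↦ y p := fun _ _ hpq ↦ y.strictMono hpq
  have hrange : (x '' D : Set ℕ) = y '' D := by
    simpa using congrArg ((↑) : Finset ℕ → Set ℕ) h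
  simp only [Set.image_eq_range] at hrange
  exact fun p hp ↦ congrFun ((hx.range_inj hy).1 hrange) ⟨p, hp⟩

lemma exists_lt_of_mem_dependenceSet (hp : p ∈ dependenceSet f) :
    ∃ x y : Fin r ↪o ℕ, (∀ i ≠ p, x i = y i) ∧ x p < y p ∧ f x ≠ f y := by
  obtain ⟨x, y, hoff, hne⟩ := mem_dependenceSet.1 hp
  obtain hlt | heq | hlt := lt_trichotomy (x p) (y p)
  · exact ⟨x, y, hoff, hlt, hne⟩
  · refine (hne (congrArg f (RelEmbedding.ext fun i ↦ ?_))).elim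
    obtain rfl | hi := eq_or_ne i p
    exacts [heq, hoff i hi]
  · exact ⟨y, x, fun i hi ↦ (hoff i hi).symm, hlt, hne.symm⟩

lemma le_iff_of_eq_off (hoff : ∀ i ≠ p, x i = y i) (hlt : x p < y p) (i k : Fin r) :
    x i ≤ y k ↔ i ≤ k := by
  obtain rfl | hk := eq_or_ne k p
  · obtain rfl | hi := eq_or_ne i k
    · simp [hlt.le]
    · rw [hoff i hi, y.le_iff_le]
  · rw [← hoff k hk, x.le_iff_le]

lemma ge_iff_of_eq_off (hoff : ∀ i ≠ p, x i = y i) (hlt : x p < y p) (i k : Fin r) :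
    y k ≤ x i ↔ k ≤ i ∧ (i = p → k ≠ p) := by
  obtain rfl | hk := eq_or_ne k p
  · obtain rfl | hi := eq_or_ne i k
    · simp [hlt]
    · simp [hoff i hi, hi]
  · simp [← hoff k hk, hk]

end Pattern

section Homogeneous

variable {ι I : Type*} {r : ℕ} {s : ι → (Fin r ↪o ℕ) → I}

namespace IsHomogeneous

variable (hs : IsHomogeneous s)
include hs

lemma eq_iff_of_same_pattern {x y z w : Fin r ↪o ℕ} (hle : ∀ i k, x i ≤ y k ↔ z i ≤ w k)
    (hge : ∀ i k, y k ≤ x i ↔ w k ≤ z i) (j j' : ι) : s j x = s j' y ↔ s j z = s j' w := by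
  obtain ⟨σ, τ, h⟩ := exists_orderEmbedding_apply_eq_apply (y := Sum.elim x y) (z := Sum.elim z w)
    (by rintro (i | i) (k | k) <;> simp [hle, hge])
  have hxz : x.trans σ = z.trans τ := RelEmbedding.ext fun i ↦ h (.inl i)
  have hyw : y.trans σ = w.trans τ := RelEmbedding.ext fun i ↦ h (.inr i)
  rw [hs σ, hs τ z, hxz, hyw]

variable {j j' : ι} {p : Fin r}

lemma apply_ne_of_mem_dependenceSet (hp : p ∈ dependenceSet (s j)) {x y : Fin r ↪o ℕ}
    (hoff : ∀ i ≠ p, x i = y i) (hxy : x p ≠ y p) : s j x ≠ s j y := by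
  wlog hlt : x p < y p generalizing x y
  · exact (this (fun i hi ↦ (hoff i hi).symm) hxy.symm (hxy.lt_or_gt.resolve_left hlt)).symm
  obtain ⟨u, v, hoff', hlt', hne⟩ := exists_lt_of_mem_dependenceSet hp
  refine fun h ↦ hne ((hs.eq_iff_of_same_pattern (fun i k ↦ ?_) (fun i k ↦ ?_) j j).1 h)
  · rw [le_iff_of_eq_off hoff hlt, le_iff_of_eq_off hoff' hlt']
  · rw [ge_iff_of_eq_off hoff hlt, ge_iff_of_eq_off hoff' hlt']

lemma exists_mem_dependenceSet_apply_eq {x y : Fin r ↪o ℕ} (hxy : s j x = s j' y)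
    (hp : p ∈ dependenceSet (s j)) : ∃ q ∈ dependenceSet (s j'), y q = x p := by
  by_contra! hne
  let double : ℕ ↪o ℕ := .ofMapLEIff (2 * ·) (by simp)
  let bump : ℕ ↪o ℕ := OrderEmbedding.ofStrictMono (fun n ↦ if n = x p then 2 * n + 1 else 2 * n)
    fun m n hmn ↦ by dsimp only; split_ifs <;> omega
  have hbump {n : ℕ} (hn : n ≠ x p) : bump n = double n := if_neg hn
  refine hs.apply_ne_of_mem_dependenceSet hp (x := x.trans bump) (y := x.trans double)
    (fun i hi ↦ hbump (x.injective.ne hi)) ?_ ?_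
  · change (if x p = x p then 2 * x p + 1 else 2 * x p) ≠ 2 * x p
    simp
  · calc s j (x.trans bump) = s j' (y.trans bump) := (hs bump x y j j').1 hxy
      _ = s j' (y.trans double) := apply_eq_of_eqOn_dependenceSet fun q hq ↦ hbump (hne q hq)
      _ = s j (x.trans double) := ((hs double x y j j').1 hxy).symm

lemma map_dependenceSet_eq {x y : Fin r ↪o ℕ} (hxy : s j x = s j' y) :
    (dependenceSet (s j)).map x.toEmbedding = (dependenceSet (s j')).map y.toEmbedding := by
  refine le_antisymm ?_ ?_ <;> refine fun n hn ↦ ?_ <;>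
    obtain ⟨p, hp, rfl⟩ := Finset.mem_map.1 hn
  · exact Finset.mem_map.2 (hs.exists_mem_dependenceSet_apply_eq hxy hp)
  · exact Finset.mem_map.2 (hs.exists_mem_dependenceSet_apply_eq hxy.symm hp)

end IsHomogeneous

/-- Two members of a family of functions are linked if they have a common value. For a
homogeneous family this is an equivalence relation. -/
def Linked (s : ι → (Fin r ↪o ℕ) → I) (j j' : ι) : Prop :=
  ∃ x y, s j x = s j' y

lemma linked_refl (s : ι → (Fin r ↪o ℕ) → I) (j : ι) : Linked s j j :=
  ⟨Fin.valOrderEmb r, Fin.valOrderEmb r, rfl⟩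

namespace IsHomogeneous

variable (hs : IsHomogeneous s) {j j' j'' : ι}
include hs

lemma linked_trans (h : Linked s j j') (h' : Linked s j' j'') : Linked s j j'' := by
  obtain ⟨x, y, hxy⟩ := h
  obtain ⟨y', z, hyz⟩ := h'
  obtain ⟨σ, τ, hστ⟩ := exists_orderEmbedding_apply_eq_apply (y := y) (z := y') (by simp)
  refine ⟨x.trans σ, z.trans τ, ?_⟩
  calc s j (x.trans σ) = s j' (y.trans σ) := (hs σ x y j j').1 hxy
    _ = s j' (y'.trans τ) := congrArg (s j') (RelEmbedding.ext hστ)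
    _ = s j'' (z.trans τ) := (hs τ y' z j' j'').1 hyz

lemma eq_of_linked_of_dependenceSet_eq (hinj : ∀ x, Function.Injective (s · x))
    (hlinked : Linked s j j') (hD : dependenceSet (s j) = dependenceSet (s j')) : j = j' := by
  obtain ⟨x, y, hxy⟩ := hlinked
  have hmap := hs.map_dependenceSet_eq hxy
  rw [hD] at hmap
  exact hinj x (hxy.trans (apply_eq_of_eqOn_dependenceSet (eqOn_of_map_eq hmap)).symm)

lemma card_filter_dependenceSet_eq {x y : Fin r ↪o ℕ} (hxy : s j x = s j' y) (P : ℕ → Prop)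
    [DecidablePred P] : ((dependenceSet (s j)).filter fun i ↦ P (x i)).card =
      ((dependenceSet (s j')).filter fun i ↦ P (y i)).card := by
  have h := congrArg (fun A ↦ (A.filter P).card) (hs.map_dependenceSet_eq hxy)
  simpa [Finset.filter_map, Function.comp_def] using h

end IsHomogeneous

section Parity

open Filter

lemma exists_frequently_and_color_eq {κ : Type*} [Finite κ] (c : ℕ → κ) {P : ℕ → Prop}
    (hP : ∃ᶠ n in atTop, P n) : ∃ k, ∃ᶠ n in atTop, P n ∧ c n = k := by
  by_contra! h
  obtain ⟨n, hn, hcolor⟩ := (hP.and_eventually (eventually_all.2 h)).exists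
  exact hcolor (c n) hn rfl

lemma exists_orderEmbedding_odd_iff_mem {κ : Type*} [Finite κ] (c : ℕ → κ) (T : Set ℕ) :
    ∃ φ : ℕ ↪o ℕ, (∀ n, Odd (φ n) ↔ n ∈ T) ∧ ∀ m n, (m ∈ T ↔ n ∈ T) → c (φ m) = c (φ n) := by
  classical
  obtain ⟨k, hk⟩ := exists_frequently_and_color_eq c Nat.frequently_odd
  obtain ⟨l, hl⟩ := exists_frequently_and_color_eq c Nat.frequently_even
  have hfreq (n : ℕ) : ∃ᶠ m in atTop, (Odd m ↔ n ∈ T) ∧ c m = if n ∈ T then k else l := by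
    by_cases hn : n ∈ T
    · simpa [hn] using hk
    · simpa [hn] using hl
  obtain ⟨φ, hφ, hφT⟩ := extraction_forall_of_frequently hfreq
  refine ⟨OrderEmbedding.ofStrictMono φ hφ, fun n ↦ (hφT n).1, fun m n hmn ↦ ?_⟩
  calc c (φ m) = if m ∈ T then k else l := (hφT m).2
    _ = if n ∈ T then k else l := by simp only [hmn]
    _ = c (φ n) := (hφT n).2.symm

end Parity

/-- The values `s j y` of the functions linked to `s j₀` at tuples for which `s j` depends on
exactly `m` of the odd entries. -/
def parityClass (s : ι → (Fin r ↪o ℕ) → I) (j₀ : ι) (m : ℕ) : Set I :=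
  {a | ∃ j y, Linked s j j₀ ∧ ((dependenceSet (s j)).filter fun i ↦ Odd (y i)).card = m ∧ s j y = a}

lemma IsHomogeneous.apply_mem_parityClass_iff (hs : IsHomogeneous s) {j j₀ : ι} {m : ℕ}
    {x : Fin r ↪o ℕ} : s j x ∈ parityClass s j₀ m ↔
      Linked s j j₀ ∧ ((dependenceSet (s j)).filter fun i ↦ Odd (x i)).card = m := by
  constructor
  · rintro ⟨j', y, hlinked, hcard, hyx⟩
    exact ⟨hs.linked_trans ⟨x, y, hyx.symm⟩ hlinked,
      (hs.card_filter_dependenceSet_eq hyx.symm Odd).trans hcard⟩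
  · exact fun ⟨hlinked, hcard⟩ ↦ ⟨j, x, hlinked, hcard, rfl⟩

theorem IsHomogeneous.exists_color_eq_and_mem_parityClass_iff (hs : IsHomogeneous s) {κ : Type*}
    [Finite κ] (c : ℕ → κ) (T : Finset (Fin r)) : ∃ x : Fin r ↪o ℕ,
      (∀ i k, (i ∈ T ↔ k ∈ T) → c (x i) = c (x k)) ∧ ∀ j j₀ m, s j x ∈ parityClass s j₀ m ↔
        Linked s j j₀ ∧ (dependenceSet (s j) ∩ T).card = m := by
  obtain ⟨φ, hφodd, hφc⟩ := exists_orderEmbedding_odd_iff_mem c (Fin.val '' (T : Set (Fin r)))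
  have hmem (i : Fin r) : (i : ℕ) ∈ Fin.val '' (T : Set (Fin r)) ↔ i ∈ T := by
    simp [Fin.val_inj]
  refine ⟨(Fin.valOrderEmb r).trans φ, fun i k hik ↦ hφc i k (by simpa only [hmem]),
    fun j j₀ m ↦ ?_⟩
  have hfilter : ((dependenceSet (s j)).filter fun i ↦ Odd ((Fin.valOrderEmb r).trans φ i)) =
      dependenceSet (s j) ∩ T := by
    rw [← Finset.filter_mem_eq_inter]
    exact Finset.filter_congr fun i _ ↦ (hφodd i).trans (hmem i)
  rw [hs.apply_mem_parityClass_iff, hfilter]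

end Homogeneous

/-! ### Divisible groups and characters -/

section CyclicSum

lemma sSupIndep_insert {α : Type*} [CompleteLattice α] [IsModularLattice α] {s : Set α} {a : α}
    (hs : sSupIndep s) (ha : Disjoint a (sSup s)) : sSupIndep (insert a s) := by
  rintro x (rfl | hx)
  · exact ha.mono_right (sSup_le_sSup (by simp))
  · have hle : sSup (insert a s \ {x}) ≤ sSup (s \ {x}) ⊔ a := by
      rw [sup_comm, ← sSup_insert]
      exact sSup_le_sSup (Set.insert_sdiff_subset)
    refine ((hs hx).disjoint_sup_right_of_disjoint_sup_left (ha.symm.mono_left ?_)).mono_right hle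
    exact sup_le (le_sSup hx) (sSup_le_sSup Set.sdiff_subset)

theorem exists_maximal_sSupIndep_cyclic (R M : Type*) [Ring R] [AddCommGroup M] [Module R M] :
    ∃ S : Set (Submodule R M), sSupIndep S ∧ (∀ N ∈ S, ∃ h, N = R ∙ h) ∧
      ∀ h, Disjoint (R ∙ h) (sSup S) → h = 0 := by
  obtain ⟨S, ⟨hindep, hcyclic⟩, hmax⟩ := zorn_subset
    {S : Set (Submodule R M) | sSupIndep S ∧ ∀ N ∈ S, ∃ h, N = R ∙ h} fun c hc hchain ↦
      ⟨⋃₀ c, ⟨iSupIndep_sUnion_of_directed hchain.directedOn fun S hS ↦ (hc hS).1,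
        fun N ⟨S, hS, hN⟩ ↦ (hc hS).2 N hN⟩, fun _ ↦ Set.subset_sUnion_of_mem⟩
  refine ⟨S, hindep, hcyclic, fun h hdisj ↦ ?_⟩
  have hmem : R ∙ h ∈ S := hmax ⟨sSupIndep_insert hindep hdisj,
    Set.forall_mem_insert.2 ⟨⟨h, rfl⟩, hcyclic⟩⟩ (Set.subset_insert _ _) (Set.mem_insert _ _)
  exact Submodule.span_singleton_eq_bot.1 (hdisj.eq_bot_of_le (le_sSup hmem))

end CyclicSum

section Divisible

noncomputable instance finsuppDivisibleBy {I D : Type*} [AddCommGroup D] [DivisibleBy D ℤ] :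
    DivisibleBy (I →₀ D) ℤ :=
  divisibleByOfSMulRightSurj _ _ fun {n} hn f ↦ by
    have hsurj : Function.Surjective fun d : D ↦ n • d := fun d ↦
      ⟨DivisibleBy.div d n, DivisibleBy.div_cancel d hn⟩
    obtain ⟨g, hg⟩ := Finsupp.mapRange_surjective (α := I) _ (smul_zero n) hsurj f
    exact ⟨g, hg ▸ by ext; simp⟩

variable {H D : Type*} [AddCommGroup H] [AddCommGroup D] [DivisibleBy D ℤ]

lemma exists_addMonoidHom_apply_eq {h : H} {d : D} (hd : addOrderOf d ∣ addOrderOf h) :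
    ∃ φ : H →+ D, φ h = d := by
  have hker : (zmultiplesHom H h).ker ≤ (zmultiplesHom D d).ker := fun n hn ↦ by
    simp only [AddMonoidHom.mem_ker, zmultiplesHom_apply,
      ← addOrderOf_dvd_iff_zsmul_eq_zero] at hn ⊢
    exact (Int.natCast_dvd_natCast.2 hd).trans hn
  obtain ⟨φ, hφ⟩ := (Module.Baer.of_divisible D).extension_property_addMonoidHom
    (QuotientAddGroup.kerLift _) (QuotientAddGroup.kerLift_injective (zmultiplesHom H h))
    (QuotientAddGroup.lift _ _ hker)
  exact ⟨φ, by simpa using DFunLike.congr_fun hφ ((1 : ℤ) : ℤ ⧸ (zmultiplesHom H h).ker)⟩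

lemma exists_addMonoidHom_injOn_span_singleton (hD : ∀ k, ∃ d : D, addOrderOf d = k) (h : H) :
    ∃ φ : H →+ D, Set.InjOn φ (ℤ ∙ h) := by
  obtain ⟨d, hd⟩ := hD (addOrderOf h)
  obtain ⟨φ, rfl⟩ := exists_addMonoidHom_apply_eq hd.dvd
  have hker : ∀ n : ℤ, n • φ h = 0 → n • h = 0 := fun n hn ↦ by
    rwa [← addOrderOf_dvd_iff_zsmul_eq_zero, ← hd, addOrderOf_dvd_iff_zsmul_eq_zero]
  refine ⟨φ, fun x hx y hy hxy ↦ ?_⟩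
  obtain ⟨n, hn⟩ := Submodule.mem_span_singleton.1 ((ℤ ∙ h).sub_mem hx hy)
  rw [← sub_eq_zero, ← hn]
  exact hker n (by rw [← map_zsmul, hn, map_sub, hxy, sub_self])

theorem exists_injective_addMonoidHom_finsupp (H : Type*) [AddCommGroup H]
    (hD : ∀ k, ∃ d : D, addOrderOf d = k) :
    ∃ (S : Set (Submodule ℤ H)) (φ : H →+ (S →₀ D)), Function.Injective φ := by
  classical
  obtain ⟨S, hindep, hcyclic, hess⟩ := exists_maximal_sSupIndep_cyclic ℤ H
  have hcoord (N : S) : ∃ φ : N →+ D, Function.Injective φ := by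
    obtain ⟨h, hN⟩ := hcyclic N N.2
    obtain ⟨φ, hφ⟩ := exists_addMonoidHom_injOn_span_singleton hD h
    exact ⟨φ.comp N.1.subtype.toAddMonoidHom, fun x y hxy ↦
      Subtype.ext (hφ (hN ▸ x.2) (hN ▸ y.2) hxy)⟩
  choose coord hcoord using hcoord
  let incl : (Π₀ N : S, N) →+ H := (DFinsupp.lsum ℕ fun N : S ↦ N.1.subtype).toAddMonoidHom
  let coords : (Π₀ N : S, N) →+ (S →₀ D) :=
    finsuppAddEquivDFinsupp.symm.toAddMonoidHom.comp (DFinsupp.mapRange.addMonoidHom coord)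
  have hcoords : Function.Injective coords :=
    finsuppAddEquivDFinsupp.symm.injective.comp
      ((DFinsupp.mapRange_injective _ fun N ↦ map_zero (coord N)).2 hcoord)
  obtain ⟨φ, hφ⟩ := (Module.Baer.of_divisible (S →₀ D)).extension_property_addMonoidHom
    incl ((sSupIndep_iff S).1 hindep).dfinsupp_lsum_injective coords
  refine ⟨S, φ, (injective_iff_map_eq_zero φ).2 fun h hh ↦ hess h ?_⟩
  refine Submodule.disjoint_def.2 fun x hxh hxS ↦ ?_
  have hφx : φ x = 0 := by
    obtain ⟨n, rfl⟩ := Submodule.mem_span_singleton.1 hxh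
    rw [map_zsmul, hh, smul_zero]
  obtain ⟨m, rfl⟩ := (Submodule.mem_iSup_iff_exists_dfinsupp _ _).1 (sSup_eq_iSup' S ▸ hxS)
  have hm : m = 0 := hcoords <| by
    rw [map_zero, ← hφ]
    exact hφx
  rw [hm, map_zero]

lemma exists_addMonoidHom_addCircle_apply_ne_zero {h : H} (hh : h ≠ 0) :
    ∃ ψ : H →+ AddCircle (1 : ℝ), ψ h ≠ 0 := by
  have : Fact ((0 : ℝ) < 1) := ⟨one_pos⟩
  obtain ⟨p, hp, hdvd⟩ := Nat.exists_prime_and_dvd (AddMonoid.addOrderOf_eq_one_iff.not.2 hh)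
  have horder := AddCircle.addOrderOf_period_div (p := (1 : ℝ)) hp.pos
  obtain ⟨ψ, hψ⟩ := exists_addMonoidHom_apply_eq (horder.dvd.trans hdvd)
  refine ⟨ψ, fun h0 ↦ hp.ne_one ?_⟩
  rw [← horder, ← hψ, h0, addOrderOf_zero]

/-- A countable divisible group with elements of every order; every abelian group embeds into a
direct sum of copies of it. -/
abbrev CountableCogenerator : Type := ℚ × AddCircle (1 : ℚ)

lemma CountableCogenerator.exists_addOrderOf_eq (k : ℕ) :
    ∃ c : CountableCogenerator, addOrderOf c = k := by
  have : Fact ((0 : ℚ) < 1) := ⟨one_pos⟩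
  obtain rfl | hk := k.eq_zero_or_pos
  · exact ⟨(1, 0), by simp [Prod.addOrderOf, not_isOfFinAddOrder_of_isAddTorsionFree one_ne_zero]⟩
  · exact ⟨(0, ((1 / k : ℚ) : AddCircle (1 : ℚ))), by
      rw [Prod.addOrderOf, addOrderOf_zero, Nat.lcm_one_left, AddCircle.addOrderOf_period_div hk]⟩

instance : Countable CountableCogenerator :=
  have : Countable (AddCircle (1 : ℚ)) := Quotient.countable
  inferInstance

end Divisible

/-! ### Sums over subsets of a four-element set -/

section FourSubsets

open Finset

lemma filter_card_inter_self_eq_singleton {α : Type*} [Fintype α] [DecidableEq α] (K : Finset α) :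
    (univ.powersetCard #K).filter (fun M ↦ #(M ∩ K) = #K) = {K} := by
  ext M
  simp only [mem_filter, mem_powersetCard_univ, mem_singleton]
  refine ⟨fun ⟨hM, hMK⟩ ↦ ?_, by rintro rfl; simp⟩
  have hKM : M ∩ K = K := eq_of_subset_of_card_le inter_subset_right hMK.ge
  exact (eq_of_subset_of_card_le (inter_eq_right.1 hKM) hM.le).symm

lemma filter_card_inter_symmDiff_eq_pair {K L : Finset (Fin 4)} (hodd : Odd #K)
    (hcard : #L = #K) (hne : K ≠ L) :
    (univ.powersetCard #K).filter (fun M ↦ #(M ∩ symmDiff K L) = 1) = {K, L} := by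
  revert K L
  decide +kernel

lemma exists_two_other_of_odd_card {K : Finset (Fin 4)} (hodd : Odd #K) :
    ∃ L M, K ≠ L ∧ K ≠ M ∧ L ≠ M ∧ #L = #K ∧ #M = #K := by
  revert K
  decide +kernel

lemma even_card_symmDiff {α : Type*} [DecidableEq α] {K L : Finset α} (hcard : #L = #K) :
    Even #(symmDiff K L) := by
  have hK := card_sdiff_add_card_inter K L
  have hL := card_sdiff_add_card_inter L K
  rw [inter_comm] at hL
  rw [symmDiff_def, sup_eq_union, card_union_of_disjoint disjoint_sdiff_sdiff]
  exact ⟨#(K \ L), by omega⟩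

variable {C : Type*} [AddCommGroup C]

theorem add_self_eq_zero_of_sum_card_inter_eq_zero {W : Finset (Fin 4) → C} {K : Finset (Fin 4)}
    (hW : ∀ T : Finset (Fin 4), Even #T → ∀ m,
      ∑ M ∈ univ.powersetCard #K with #(M ∩ T) = m, W M = 0) :
    W K + W K = 0 := by
  obtain heven | hodd := (#K).even_or_odd
  · have hK : W K = 0 := by simpa [filter_card_inter_self_eq_singleton] using hW K heven #K
    rw [hK, add_zero]
  · have hpair {L M : Finset (Fin 4)} (hL : #L = #K) (hM : #M = #K) (hne : L ≠ M) :
        W L + W M = 0 := by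
      have h := hW (symmDiff L M) (even_card_symmDiff (hM.trans hL.symm)) 1
      rwa [← hL, filter_card_inter_symmDiff_eq_pair (hL ▸ hodd) (hM.trans hL.symm) hne,
        sum_pair hne] at h
    obtain ⟨L, M, hKL, hKM, hLM, hL, hM⟩ := exists_two_other_of_odd_card hodd
    calc W K + W K = (W K + W L) + (W K + W M) - (W L + W M) := by abel
      _ = 0 := by
        simp only [hpair rfl hL hKL, hpair rfl hM hKM, hpair hL hM hLM, add_zero, sub_zero]

theorem add_self_eq_zero_of_sum_fiber_eq_zero {ι : Type*} {J : Finset ι} {D : ι → Finset (Fin 4)}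
    {V : ι → C} {j : ι} (hj : j ∈ J) (hinj : ∀ i ∈ J, D i = D j → i = j)
    (hcard : ∀ i ∈ J, #(D i) = #(D j))
    (hV : ∀ T : Finset (Fin 4), Even #T → ∀ m, ∑ i ∈ J with #(D i ∩ T) = m, V i = 0) :
    V j + V j = 0 := by
  classical
  have hfiber : ∑ i ∈ J with D i = D j, V i = V j := by
    refine sum_eq_single_of_mem j (by simp [hj]) fun i hi hij ↦ (hij ?_).elim
    exact hinj i (mem_filter.1 hi).1 (mem_filter.1 hi).2
  rw [← hfiber]
  refine add_self_eq_zero_of_sum_card_inter_eq_zero (W := fun K ↦ ∑ i ∈ J with D i = K, V i)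
    fun T hT m ↦ ?_
  rw [← hV T hT m, ← sum_fiberwise_of_maps_to (g := D)
    (t := {K ∈ univ.powersetCard #(D j) | #(K ∩ T) = m})]
  · refine sum_congr rfl fun K hK ↦ sum_congr ?_ fun _ _ ↦ rfl
    rw [filter_filter]
    refine filter_congr fun i _ ↦ ⟨?_, And.right⟩
    rintro rfl
    exact ⟨(mem_filter.1 hK).2, rfl⟩
  · intro i hi
    obtain ⟨hi, hm⟩ := mem_filter.1 hi
    simp [hcard i hi, hm]

end FourSubsets

/-! ### Continuity in the Bohr topology -/

section BohrNull

open Finset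

variable {A B : Type*} [AddCommGroup A] [AddCommGroup B] {r : ℕ}

/-- `F` is Bohr-null if for every character `χ` and every `t ≠ 0`, some finite coloring of the
entries prevents `χ (F x) = t` for all tuples `x` that split into two sets of even size, each
with a single color. -/
def IsBohrNull (F : (Fin r ↪o ℕ) → A) : Prop :=
  ∀ (χ : A →+ AddCircle (1 : ℝ)) (t : AddCircle (1 : ℝ)), t ≠ 0 → ∃ (n : ℕ) (c : ℕ → Fin n),
    ∀ (T : Finset (Fin r)) (x : Fin r ↪o ℕ), Even #T → Even #Tᶜ →
      (∀ i k, (i ∈ T ↔ k ∈ T) → c (x i) = c (x k)) → χ (F x) ≠ t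

lemma IsBohrNull.map {F : (Fin r ↪o ℕ) → A} (hF : IsBohrNull F) (φ : A →+ B) :
    IsBohrNull fun x ↦ φ (F x) :=
  fun χ ↦ hF (χ.comp φ)

lemma sum_eq_zero_of_even_card {ι : Type*} (hA : ∀ a : A, a + a = 0) {s : Finset ι}
    (hs : Even #s) {y : ι → A} (hy : ∀ i ∈ s, ∀ k ∈ s, y i = y k) : ∑ i ∈ s, y i = 0 := by
  obtain rfl | ⟨i, hi⟩ := s.eq_empty_or_nonempty
  · exact sum_empty
  · obtain ⟨n, hn⟩ := hs
    rw [sum_eq_card_nsmul fun k hk ↦ hy k hk i hi, hn, add_nsmul, hA]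

variable {G H : Type*} [AddCommGroup G] [AddCommGroup H]

lemma nhds_bohrTopology (a : G) : @nhds G (bohrTopology G) a =
    ⨅ χ : G →+ AddCircle (1 : ℝ), Filter.comap χ (nhds (χ a)) := by
  rw [bohrTopology, nhds_iInf]
  simp only [nhds_induced]

lemma continuous_bohrTopology (χ : H →+ AddCircle (1 : ℝ)) :
    @Continuous H _ (bohrTopology H) _ χ :=
  continuous_iff_le_induced.2 (iInf_le _ χ)

lemma exists_finiteIndex_forall_add_mem {K : AddSubgroup G} {n : ℕ} (hn : 0 < n)
    (hK : ∀ x ∈ K, n • x = 0) {a : G} {U : Set G} (hU : U ∈ @nhds G (bohrTopology G) a) :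
    ∃ N : AddSubgroup K, N.FiniteIndex ∧ ∀ k ∈ N, a + k ∈ U := by
  rw [nhds_bohrTopology, Filter.mem_iInf] at hU
  obtain ⟨S, hS, V, hV, rfl⟩ := hU
  have := hS.to_subtype
  refine ⟨⨅ χ : S, (χ.1.comp K.subtype).ker, AddSubgroup.finiteIndex_iInf fun χ ↦ ?_,
    fun k hk ↦ Set.mem_iInter.2 fun χ ↦ ?_⟩
  · have hrange : Set.range (χ.1.comp K.subtype) ⊆ {u | n • u = 0} := by
      rintro _ ⟨k, rfl⟩
      change n • χ.1 k = 0
      rw [← map_nsmul, hK k k.2, map_zero]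
    have : Finite (χ.1.comp K.subtype).range := (AddCircle.finite_torsion 1 hn).subset hrange
    exact AddSubgroup.finiteIndex_ker _
  · have hker : χ.1 k = 0 := AddSubgroup.mem_iInf.1 hk χ
    obtain ⟨W, hW, hWV⟩ := Filter.mem_comap.1 (hV χ)
    apply hWV
    rw [Set.mem_preimage, map_add, hker, add_zero]
    exact mem_of_mem_nhds hW

theorem isBohrNull_sub_of_continuousAt {K : AddSubgroup G} (hK : ∀ x ∈ K, x + x = 0) {f : G → H}
    {a : G} (hf : @ContinuousAt G H (bohrTopology G) (bohrTopology H) f a) (g : ℕ → K) :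
    IsBohrNull fun x : Fin r ↪o ℕ ↦ f (a + ∑ i, (g (x i) : G)) - f a := by
  let := bohrTopology G
  let := bohrTopology H
  intro χ t ht
  have hU : ∀ᶠ z in nhds a, χ (f z - f a) ≠ t := by
    have hcont : ContinuousAt (fun z ↦ χ (f z) - χ (f a)) a :=
      ((continuous_bohrTopology χ).continuousAt.comp hf).sub continuousAt_const
    simpa only [map_sub] using hcont.eventually_ne (by simpa using ht.symm)
  obtain ⟨N, hN, hNU⟩ := exists_finiteIndex_forall_add_mem two_pos
    (fun x hx ↦ (two_nsmul x).trans (hK x hx)) hU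
  obtain ⟨n, ⟨e⟩⟩ := Finite.exists_equiv_fin (K ⧸ N)
  refine ⟨n, fun m ↦ e (g m), fun T x hT hT' hc ↦ ?_⟩
  have hquot (q : K ⧸ N) : q + q = 0 := by
    induction q using QuotientAddGroup.induction_on with | _ k
    rw [← QuotientAddGroup.mk_add, show k + k = 0 from Subtype.ext (hK k k.2),
      QuotientAddGroup.mk_zero]
  have hsum : ∑ i, (g (x i) : K ⧸ N) = 0 := by
    rw [← sum_add_sum_compl T,
      sum_eq_zero_of_even_card hquot hT fun i hi k hk ↦ e.injective (hc i k (by simp [hi, hk])),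
      sum_eq_zero_of_even_card hquot hT' fun i hi k hk ↦
        e.injective (hc i k (by simp_all)), add_zero]
  have hmem : ∑ i, g (x i) ∈ N := by
    rw [← QuotientAddGroup.eq_zero_iff, ← hsum]
    exact map_sum (QuotientAddGroup.mk' N) _ _
  simpa using hNU _ hmem

end BohrNull

/-! ### Expansions in a direct sum -/

section Expansion

open Finset

variable {I C : Type*} [AddCommGroup C]

lemma exists_eq_sum_single (F : I →₀ C) : ∃ (p : Σ n, Fin n → C) (s : Fin p.1 → I),
    Function.Injective s ∧ F = ∑ j, Finsupp.single (s j) (p.2 j) := by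
  let e := F.support.equivFin.symm
  refine ⟨⟨_, fun j ↦ F (e j)⟩, fun j ↦ e j, Subtype.val_injective.comp e.injective, ?_⟩
  rw [e.sum_comp fun i : F.support ↦ Finsupp.single (i : I) (F i),
    F.support.sum_coe_sort fun i ↦ Finsupp.single i (F i)]
  exact F.sum_single.symm

theorem exists_nat_embedding_isHomogeneous_expansion [Countable C] {α : Type*} {r : ℕ}
    (hα : (2 ^ ·)^[r] Cardinal.aleph0 < Cardinal.mk α) (F : (Fin (r + 1) → α) → I →₀ C) :
    ∃ (g : ℕ ↪ α) (n : ℕ) (V : Fin n → C) (s : Fin n → (Fin (r + 1) ↪o ℕ) → I),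
      IsHomogeneous s ∧ (∀ x, Function.Injective (s · x)) ∧
        ∀ x : Fin (r + 1) ↪o ℕ, F (g ∘ x) = ∑ j, Finsupp.single (s j x) (V j) := by
  choose p hp using fun y ↦ exists_eq_sum_single (F y)
  obtain ⟨g, hg⟩ := exists_nat_embedding_forall_color_eq hα p
  rcases hV : p (g ∘ Fin.valOrderEmb (r + 1)) with ⟨n, V⟩
  have hform (x : Fin (r + 1) ↪o ℕ) : ∃ s : Fin n → I,
      Function.Injective s ∧ F (g ∘ x) = ∑ j, Finsupp.single (s j) (V j) := by
    have h := hp (g ∘ x)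
    rwa [hg x (Fin.valOrderEmb (r + 1)), hV] at h
  choose s hinj hs using hform
  obtain ⟨σ, hσ⟩ := exists_isHomogeneous fun j x ↦ s x j
  exact ⟨σ.toEmbedding.trans g, n, V, _, hσ, fun x ↦ hinj _, fun x ↦ hs (x.trans σ)⟩

variable {ι : Type*} [Fintype ι] {r : ℕ}

open Classical in
theorem IsHomogeneous.sum_linked_eq_zero {s : ι → (Fin r ↪o ℕ) → I} (hs : IsHomogeneous s)
    {V : ι → C} (hnull : IsBohrNull fun x ↦ ∑ j, Finsupp.single (s j x) (V j)) (j₀ : ι)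
    {T : Finset (Fin r)} (hT : Even #T) (hT' : Even #Tᶜ) (m : ℕ) :
    ∑ j with Linked s j j₀ ∧ #(dependenceSet (s j) ∩ T) = m, V j = 0 := by
  by_contra hne
  obtain ⟨ψ, hψ⟩ := exists_addMonoidHom_addCircle_apply_ne_zero hne
  let χ : (I →₀ C) →+ AddCircle (1 : ℝ) :=
    Finsupp.liftAddHom fun i ↦ if i ∈ parityClass s j₀ m then ψ else 0
  obtain ⟨n, c, hc⟩ := hnull χ _ hψ
  obtain ⟨x, hcolor, hmem⟩ := hs.exists_color_eq_and_mem_parityClass_iff c T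
  refine hc T x hT hT' hcolor ?_
  rw [map_sum, map_sum, sum_filter]
  refine sum_congr rfl fun j _ ↦ ?_
  simp only [χ, Finsupp.liftAddHom_apply_single, hmem]
  split_ifs <;> rfl

theorem IsHomogeneous.add_self_eq_zero_of_isBohrNull {s : ι → (Fin 4 ↪o ℕ) → I}
    (hs : IsHomogeneous s) (hinj : ∀ x, Function.Injective (s · x)) {V : ι → C}
    (hnull : IsBohrNull fun x ↦ ∑ j, Finsupp.single (s j x) (V j)) (j : ι) : V j + V j = 0 := by
  classical
  refine add_self_eq_zero_of_sum_fiber_eq_zero (J := {i | Linked s i j})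
    (D := fun i ↦ dependenceSet (s i)) (by simp [linked_refl]) (fun i hi hD ↦ ?_) (fun i hi ↦ ?_)
    fun T hT m ↦ ?_
  · exact hs.eq_of_linked_of_dependenceSet_eq hinj (by simpa using hi) hD
  · obtain ⟨x, y, hxy⟩ : Linked s i j := by simpa using hi
    simpa using congrArg card (hs.map_dependenceSet_eq hxy)
  · rw [filter_filter]
    refine hs.sum_linked_eq_zero hnull j hT ?_ m
    rw [card_compl, Fintype.card_fin]
    exact (Nat.even_sub (card_le_univ T)).2 (by simp [hT, Nat.even_iff])

theorem exists_nat_embedding_add_self_eq_zero {α H : Type*} [AddCommGroup H]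
    (hα : (2 ^ ·)^[3] Cardinal.aleph0 < Cardinal.mk α) (F : (Fin 4 → α) → H)
    (hF : ∀ g : ℕ ↪ α, IsBohrNull fun x : Fin 4 ↪o ℕ ↦ F (g ∘ x)) :
    ∃ g : ℕ ↪ α, ∀ x : Fin 4 ↪o ℕ, F (g ∘ x) + F (g ∘ x) = 0 := by
  obtain ⟨S, φ, hφ⟩ :=
    exists_injective_addMonoidHom_finsupp H CountableCogenerator.exists_addOrderOf_eq
  obtain ⟨g, n, V, s, hs, hinj, hexp⟩ :=
    exists_nat_embedding_isHomogeneous_expansion hα fun y ↦ φ (F y)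
  have hnull : IsBohrNull fun x ↦ ∑ j, Finsupp.single (s j x) (V j) := by
    simpa only [← hexp] using (hF g).map φ
  have hV := hs.add_self_eq_zero_of_isBohrNull hinj hnull
  refine ⟨g, fun x ↦ hφ ?_⟩
  simp only [map_add, map_zero, hexp, ← sum_add_distrib, ← Finsupp.single_add, hV,
    Finsupp.single_zero, sum_const_zero]

end Expansion

lemma iterate_three_two_pow_aleph0 :
    (2 ^ · : Cardinal → Cardinal)^[3] Cardinal.aleph0 =
      2 ^ ((2 : Cardinal) ^ Cardinal.continuum) := by
  simp [Cardinal.two_power_aleph0]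

lemma exists_fin_four_orderEmbedding (m : ℕ) : ∃ x : Fin 4 ↪o ℕ, ⇑x = ![0, 1, 2, m + 3] :=
  have hmono : StrictMono ![0, 1, 2, m + 3] := by
    refine Fin.strictMono_iff_lt_succ.2 fun i ↦ ?_
    fin_cases i <;> simp
  ⟨OrderEmbedding.ofStrictMono _ hmono, rfl⟩

theorem bohr_no_continuous_finite_to_one_general (G H : Type*) [AddCommGroup G] [AddCommGroup H]
    (hG : ∃ K : AddSubgroup G, (∀ x ∈ K, x + x = 0) ∧
      (2 : Cardinal) ^ ((2 : Cardinal) ^ Cardinal.continuum) < Cardinal.mk K)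
    (hH : ∀ K : AddSubgroup H, (∀ x ∈ K, x + x = 0) → (K : Set H).Finite) :
    letI := bohrTopology G
    letI := bohrTopology H
    ¬ ∃ (f : G → H) (a : G), ContinuousAt f a ∧ ∀ y : H, (f ⁻¹' {y}).Finite := by
  rintro ⟨f, a, hf, hfib⟩
  obtain ⟨K, hK, hcard⟩ := hG
  obtain ⟨g, hg⟩ := exists_nat_embedding_add_self_eq_zero
    (iterate_three_two_pow_aleph0.trans_lt hcard)
    (fun y ↦ f (a + ∑ i, (y i : G)) - f a) fun g ↦ isBohrNull_sub_of_continuousAt hK hf g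
  let torsion : AddSubgroup H := (nsmulAddMonoidHom 2).ker
  have htorsion (h : H) : h ∈ torsion ↔ h + h = 0 := by
    rw [AddMonoidHom.mem_ker, nsmulAddMonoidHom_apply, two_nsmul]
  have hfinite : {z | f z - f a ∈ torsion}.Finite :=
    (((hH torsion fun h ↦ (htorsion h).1).preimage (sub_left_injective.injOn)).preimage'
      fun b _ ↦ hfib b)
  refine Set.infinite_of_injective_forall_mem
    (f := fun m ↦ a + (g 0 + g 1 + g 2 + g (m + 3))) (fun m n hmn ↦ ?_) (fun m ↦ ?_) hfinite
  · simpa using hmn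
  · obtain ⟨x, hx⟩ := exists_fin_four_orderEmbedding m
    simpa [hx, htorsion, Fin.sum_univ_four] using hg x

/-- If `G` contains a subgroup of exponent 2 of size `> 2^(2^𝔠)` and `H` contains no
infinite subgroup of exponent 2, then there is no continuous finite-to-one map
`f : G^# → H^#`. -/
theorem bohr_no_continuous_finite_to_one (G H : Type*) [AddCommGroup G] [AddCommGroup H]
    (hG : ∃ K : AddSubgroup G, (∀ x ∈ K, x + x = 0) ∧
      (2 : Cardinal) ^ ((2 : Cardinal) ^ Cardinal.continuum) < Cardinal.mk K)
    (hH : ∀ K : AddSubgroup H, (∀ x ∈ K, x + x = 0) → (K : Set H).Finite) :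
    letI := bohrTopology G
    letI := bohrTopology H
    ¬ ∃ f : G → H, Continuous f ∧ ∀ y : H, (f ⁻¹' {y}).Finite := by
  rintro ⟨f, hf, hfib⟩
  exact bohr_no_continuous_finite_to_one_general G H hG hH
    ⟨f, 0, (@continuous_iff_continuousAt _ _ (_) (_) _).1 hf 0, hfib⟩
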